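/- Let S be a smooth surface in ℝ³ with position vector R(s,t) = (x(s,t), y(s,t), z(s,t)) over a domain Ω ⊆ ℝ², with second fundamental form coefficients e, f, g and nonnegative Gaussian curvature (eg − f² ≥ 0). Let λ = −f + i√(eg − f²) and let L = g ∂/∂s + λ ∂/∂t be the complex vector field of asymptotic directions. Suppose U^j = (u^j, v^j, w^j) : Ω → ℝ³ is a C² solution of the system x_s u^j_s + y_s v^j_s + z_s w^j_s = F^j, x_s u^j_t + y_s v^j_t + z_s w^j_t + x_t u^j_s + y_t v^j_s + z_t w^j_s = G^j, x_t u^j_t + y_t v^j_t + z_t w^j_t = H^j for given functions F^j, G^j, H^j on Ω. Then the ℂ-valued function h^j = LR · U^j satisfies the equation C L h^j = A h^j − B conj(h^j) + C [g² F^j + g λ G^j + λ² H^j] on Ω, where A = (LR × conj(L)R) · (L²R × conj(L)R), B = (LR × conj(L)R) · (L²R × LR), and C = (LR × conj(L)R) · (LR × conj(L)R), the cross and dot products being the ℂ-bilinear extensions to ℂ³ of the standard ones on ℝ³. -/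

import Mathlib

open scoped BigOperators

noncomputable section

/-- Dot product of two 3-vectors (ℂ-bilinear extension when over ℂ). -/
def dot3 {R : Type*} [CommRing R] (v w : Fin 3 → R) : R :=
  v 0 * w 0 + v 1 * w 1 + v 2 * w 2

/-- Cross product of two 3-vectors (ℂ-bilinear extension when over ℂ). -/
def cross3 {R : Type*} [CommRing R] (v w : Fin 3 → R) : Fin 3 → R :=
  ![v 1 * w 2 - v 2 * w 1, v 2 * w 0 - v 0 * w 2, v 0 * w 1 - v 1 * w 0]

/-- Euclidean norm of a real 3-vector. -/
def enorm3 (v : Fin 3 → ℝ) : ℝ := Real.sqrt (dot3 v v)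

/-- Partial derivative with respect to the first variable `s`. -/
def pds {E : Type*} [NormedAddCommGroup E] [NormedSpace ℝ E]
    (f : ℝ × ℝ → E) (p : ℝ × ℝ) : E :=
  deriv (fun s => f (s, p.2)) p.1

/-- Partial derivative with respect to the second variable `t`. -/
def pdt {E : Type*} [NormedAddCommGroup E] [NormedSpace ℝ E]
    (f : ℝ × ℝ → E) (p : ℝ × ℝ) : E :=
  deriv (fun t => f (p.1, t)) p.2

/-- Componentwise `s`-derivative of a 3-vector valued map. -/
def vds (V : ℝ × ℝ → Fin 3 → ℝ) (p : ℝ × ℝ) : Fin 3 → ℝ := fun i => pds (fun q => V q i) p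

/-- Componentwise `t`-derivative of a 3-vector valued map. -/
def vdt (V : ℝ × ℝ → Fin 3 → ℝ) (p : ℝ × ℝ) : Fin 3 → ℝ := fun i => pdt (fun q => V q i) p

/-! The vector `LR × conj(LR)` is a multiple of `R_s × R_t`, and `L²R · (R_s × R_t) = 0` because
`(g, λ)` is a null direction of the second fundamental form. Hence `L²R` is tangent, and Cramer's
rule writes `C L²R` as `A LR - B conj(LR)`. The bending system gives
`LR · LU = g²F + gλG + λ²H`, so the equation is `L(LR · U) = L²R · U + LR · LU` multiplied by `C`.
Where `eg - f² = 0` the function `λ` need not be differentiable, but there `LR` is real and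
`A = B = C = 0`. -/

open Complex

section VectorAlgebra

variable {𝕜 : Type*} [CommRing 𝕜]

lemma dot3_eq_dotProduct (v w : Fin 3 → 𝕜) : dot3 v w = dotProduct v w := by
  rw [dot3, dotProduct, Fin.sum_univ_three]

lemma cross3_eq_crossProduct (v w : Fin 3 → 𝕜) : cross3 v w = crossProduct v w :=
  (cross_apply v w).symm

lemma cross3_linearCombination (a b c d : 𝕜) (u v : Fin 3 → 𝕜) :
    cross3 (a • u + b • v) (c • u + d • v) = (a * d - b * c) • cross3 u v := by
  simp only [cross3_eq_crossProduct, map_add, map_smul, LinearMap.add_apply, LinearMap.smul_apply,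
    cross_self, ← cross_anticomm u v]
  module

lemma dot3_cross3_self_mul_dot3 {P Q V : Fin 3 → 𝕜} (hV : dot3 V (cross3 P Q) = 0)
    (W : Fin 3 → 𝕜) :
    dot3 (cross3 P Q) (cross3 P Q) * dot3 V W
      = dot3 (cross3 P Q) (cross3 V Q) * dot3 P W
        - dot3 (cross3 P Q) (cross3 V P) * dot3 Q W := by
  have cramer : dot3 (cross3 P Q) (cross3 P Q) * dot3 V W
      = dot3 (cross3 P Q) (cross3 V Q) * dot3 P W - dot3 (cross3 P Q) (cross3 V P) * dot3 Q W
        + dot3 V (cross3 P Q) * dot3 (cross3 P Q) W := by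
    simp only [dot3, cross3, Matrix.cons_val]
    ring
  rw [cramer, hV, zero_mul, add_zero]

lemma dot3_self_eq_zero {v : Fin 3 → ℝ} : dot3 v v = 0 ↔ v = 0 := by
  rw [dot3_eq_dotProduct, dotProduct_self_eq_zero]

lemma dot3_self_nonneg (v : Fin 3 → ℝ) : 0 ≤ dot3 v v :=
  add_nonneg (add_nonneg (mul_self_nonneg _) (mul_self_nonneg _)) (mul_self_nonneg _)

lemma enorm3_eq_zero {v : Fin 3 → ℝ} : enorm3 v = 0 ↔ v = 0 := by
  rw [enorm3, Real.sqrt_eq_zero (dot3_self_nonneg v), dot3_self_eq_zero]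

lemma enorm3_mul_dot3_normalize (v n : Fin 3 → ℝ) :
    enorm3 n * dot3 v ((enorm3 n)⁻¹ • n) = dot3 v n := by
  rw [dot3_eq_dotProduct, dot3_eq_dotProduct, dotProduct_smul, smul_eq_mul]
  rcases eq_or_ne n 0 with rfl | hn
  · simp only [dotProduct_zero, mul_zero]
  · exact mul_inv_cancel_left₀ (enorm3_eq_zero.not.mpr hn) _

end VectorAlgebra

section Complexification

/-- The inclusion of `ℝ³` in `ℂ³`. -/
def complexify (v : Fin 3 → ℝ) : Fin 3 → ℂ := fun i => (v i : ℂ)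

lemma star_complexify (v : Fin 3 → ℝ) : star (complexify v) = complexify v :=
  funext fun i => conj_ofReal (v i)

lemma dot3_complexify (v w : Fin 3 → ℝ) :
    dot3 (complexify v) (complexify w) = (dot3 v w : ℝ) := by
  simp only [dot3, complexify, ofReal_add, ofReal_mul]

lemma cross3_complexify (v w : Fin 3 → ℝ) :
    cross3 (complexify v) (complexify w) = complexify (cross3 v w) := by
  ext i
  fin_cases i <;> simp [cross3, complexify]

lemma conj_dot3_complexify (P : Fin 3 → ℂ) (v : Fin 3 → ℝ) :
    starRingEnd ℂ (dot3 P (complexify v)) = dot3 (star P) (complexify v) := by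
  simp only [dot3, complexify, map_add, map_mul, conj_ofReal]
  rfl

end Complexification

section PartialDerivatives

variable {E : Type*} [NormedAddCommGroup E] [NormedSpace ℝ E] {φ : ℝ × ℝ → E} {p : ℝ × ℝ}

lemma pds_eq_fderiv (hφ : DifferentiableAt ℝ φ p) : pds φ p = fderiv ℝ φ p (1, 0) :=
  (hφ.hasFDerivAt.comp_hasDerivAt p.1
    ((hasDerivAt_id p.1).prodMk (hasDerivAt_const p.1 p.2))).deriv

lemma pdt_eq_fderiv (hφ : DifferentiableAt ℝ φ p) : pdt φ p = fderiv ℝ φ p (0, 1) :=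
  (hφ.hasFDerivAt.comp_hasDerivAt p.2
    ((hasDerivAt_const p.2 p.1).prodMk (hasDerivAt_id p.2))).deriv

lemma eventually_differentiableAt {n : WithTop ℕ∞} (hφ : ContDiffAt ℝ n φ p) (hn : 1 ≤ n) :
    ∀ᶠ q in nhds p, DifferentiableAt ℝ φ q :=
  ((hφ.of_le hn).eventually (by simp)).mono fun _ hq => hq.differentiableAt one_ne_zero

lemma pds_eventuallyEq_fderiv {n : WithTop ℕ∞} (hφ : ContDiffAt ℝ n φ p) (hn : 1 ≤ n) :
    pds φ =ᶠ[nhds p] fun q => fderiv ℝ φ q (1, 0) :=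
  (eventually_differentiableAt hφ hn).mono fun _ => pds_eq_fderiv

lemma pdt_eventuallyEq_fderiv {n : WithTop ℕ∞} (hφ : ContDiffAt ℝ n φ p) (hn : 1 ≤ n) :
    pdt φ =ᶠ[nhds p] fun q => fderiv ℝ φ q (0, 1) :=
  (eventually_differentiableAt hφ hn).mono fun _ => pdt_eq_fderiv

lemma contDiffAt_pds {m n : WithTop ℕ∞} (hφ : ContDiffAt ℝ n φ p) (hmn : m + 1 ≤ n) :
    ContDiffAt ℝ m (pds φ) p :=
  ((hφ.fderiv_right hmn).clm_apply contDiffAt_const).congr_of_eventuallyEq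
    (pds_eventuallyEq_fderiv hφ (le_add_self.trans hmn))

lemma contDiffAt_pdt {m n : WithTop ℕ∞} (hφ : ContDiffAt ℝ n φ p) (hmn : m + 1 ≤ n) :
    ContDiffAt ℝ m (pdt φ) p :=
  ((hφ.fderiv_right hmn).clm_apply contDiffAt_const).congr_of_eventuallyEq
    (pdt_eventuallyEq_fderiv hφ (le_add_self.trans hmn))

lemma pds_pdt_comm (hφ : ContDiffAt ℝ 2 φ p) : pds (pdt φ) p = pdt (pds φ) p := by
  have hs : DifferentiableAt ℝ (pds φ) p :=
    (contDiffAt_pds hφ one_add_one_eq_two.le).differentiableAt one_ne_zero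
  have ht : DifferentiableAt ℝ (pdt φ) p :=
    (contDiffAt_pdt hφ one_add_one_eq_two.le).differentiableAt one_ne_zero
  have hd : DifferentiableAt ℝ (fderiv ℝ φ) p :=
    (hφ.fderiv_right one_add_one_eq_two.le).differentiableAt one_ne_zero
  have hsymm : IsSymmSndFDerivAt ℝ φ p :=
    hφ.isSymmSndFDerivAt minSmoothness_of_isRCLikeNormedField.le
  rw [pds_eq_fderiv ht, pdt_eq_fderiv hs,
    (pdt_eventuallyEq_fderiv hφ one_le_two).fderiv_eq,
    (pds_eventuallyEq_fderiv hφ one_le_two).fderiv_eq,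
    fderiv_clm_apply hd (differentiableAt_const _), fderiv_clm_apply hd (differentiableAt_const _)]
  simpa using hsymm (1, 0) (0, 1)

lemma contDiffAt_vds {m n : WithTop ℕ∞} {V : ℝ × ℝ → Fin 3 → ℝ} (hV : ContDiffAt ℝ n V p)
    (hmn : m + 1 ≤ n) : ContDiffAt ℝ m (vds V) p :=
  contDiffAt_pi.mpr fun i => contDiffAt_pds (contDiffAt_pi.mp hV i) hmn

lemma contDiffAt_vdt {m n : WithTop ℕ∞} {V : ℝ × ℝ → Fin 3 → ℝ} (hV : ContDiffAt ℝ n V p)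
    (hmn : m + 1 ≤ n) : ContDiffAt ℝ m (vdt V) p :=
  contDiffAt_pi.mpr fun i => contDiffAt_pdt (contDiffAt_pi.mp hV i) hmn

end PartialDerivatives

section Differentiability

variable {E 𝔸 : Type*} [NormedAddCommGroup E] [NormedSpace ℝ E] [NormedCommRing 𝔸]
  [NormedAlgebra ℝ 𝔸] {x : E}

lemma differentiableAt_ofReal {u : E → ℝ} (hu : DifferentiableAt ℝ u x) :
    DifferentiableAt ℝ (fun y => (u y : ℂ)) x :=
  ofRealCLM.differentiableAt.comp x hu

lemma differentiableAt_complexify {V : E → Fin 3 → ℝ} (hV : DifferentiableAt ℝ V x) :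
    DifferentiableAt ℝ (fun y => complexify (V y)) x :=
  differentiableAt_pi.mpr fun i => differentiableAt_ofReal (differentiableAt_pi.mp hV i)

lemma differentiableAt_dot3 {V W : E → Fin 3 → 𝔸} (hV : DifferentiableAt ℝ V x)
    (hW : DifferentiableAt ℝ W x) : DifferentiableAt ℝ (fun y => dot3 (V y) (W y)) x := by
  unfold dot3
  fun_prop

lemma differentiableAt_cross3 {V W : E → Fin 3 → 𝔸} (hV : DifferentiableAt ℝ V x)
    (hW : DifferentiableAt ℝ W x) : DifferentiableAt ℝ (fun y => cross3 (V y) (W y)) x := by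
  have hminor (i j : Fin 3) : DifferentiableAt ℝ (fun y => V y i * W y j - V y j * W y i) x := by
    fun_prop
  refine differentiableAt_pi.mpr fun i => ?_
  fin_cases i
  exacts [hminor 1 2, hminor 2 0, hminor 0 1]

lemma differentiableAt_normalize {V : E → Fin 3 → ℝ} (hV : DifferentiableAt ℝ V x)
    (hx : V x ≠ 0) : DifferentiableAt ℝ (fun y => (enorm3 (V y))⁻¹ • V y) x :=
  have hnorm : DifferentiableAt ℝ (fun y => enorm3 (V y)) x :=
    (differentiableAt_dot3 hV hV).sqrt (dot3_self_eq_zero.not.mpr hx)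
  (hnorm.inv (enorm3_eq_zero.not.mpr hx)).smul hV

end Differentiability

section ComplexVectorFields

/-- The derivative `Lφ` of a complex function along the complex vector field
`L = a ∂/∂s + b ∂/∂t`. -/
def fieldDeriv (a b φ : ℝ × ℝ → ℂ) (p : ℝ × ℝ) : ℂ := a p * pds φ p + b p * pdt φ p

/-- The componentwise derivative `LV` of a `ℂ³`-valued map along `L = a ∂/∂s + b ∂/∂t`. -/
def fieldDerivVec (a b : ℝ × ℝ → ℂ) (V : ℝ × ℝ → Fin 3 → ℂ) (p : ℝ × ℝ) : Fin 3 → ℂ :=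
  fun i => fieldDeriv a b (fun q => V q i) p

/-- The derivative `LV = a V_s + b V_t` of an `ℝ³`-valued map along `L = a ∂/∂s + b ∂/∂t`, written
with the real partial derivatives. -/
def complexPushforward (a b : ℝ × ℝ → ℂ) (V : ℝ × ℝ → Fin 3 → ℝ) (p : ℝ × ℝ) : Fin 3 → ℂ :=
  a p • complexify (vds V p) + b p • complexify (vdt V p)

variable {a b φ ψ : ℝ × ℝ → ℂ} {p : ℝ × ℝ}

lemma fieldDeriv_eq_fderiv (a b : ℝ × ℝ → ℂ) (hφ : DifferentiableAt ℝ φ p) :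
    fieldDeriv a b φ p = a p * fderiv ℝ φ p (1, 0) + b p * fderiv ℝ φ p (0, 1) := by
  rw [fieldDeriv, pds_eq_fderiv hφ, pdt_eq_fderiv hφ]

lemma fieldDeriv_add (hφ : DifferentiableAt ℝ φ p) (hψ : DifferentiableAt ℝ ψ p) :
    fieldDeriv a b (fun q => φ q + ψ q) p = fieldDeriv a b φ p + fieldDeriv a b ψ p := by
  rw [fieldDeriv_eq_fderiv a b (hφ.fun_add hψ), fieldDeriv_eq_fderiv a b hφ,
    fieldDeriv_eq_fderiv a b hψ, fderiv_fun_add hφ hψ]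
  simp only [add_apply]
  ring

lemma fieldDeriv_mul (hφ : DifferentiableAt ℝ φ p) (hψ : DifferentiableAt ℝ ψ p) :
    fieldDeriv a b (fun q => φ q * ψ q) p
      = fieldDeriv a b φ p * ψ p + φ p * fieldDeriv a b ψ p := by
  rw [fieldDeriv_eq_fderiv a b (hφ.fun_mul hψ), fieldDeriv_eq_fderiv a b hφ,
    fieldDeriv_eq_fderiv a b hψ, fderiv_fun_mul hφ hψ]
  simp only [add_apply, smul_apply, smul_eq_mul]
  ring

lemma fieldDeriv_ofReal {u : ℝ × ℝ → ℝ} (hu : DifferentiableAt ℝ u p) :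
    fieldDeriv a b (fun q => (u q : ℂ)) p = a p * (pds u p : ℝ) + b p * (pdt u p : ℝ) := by
  have hcomp : fderiv ℝ (fun q => (u q : ℂ)) p = ofRealCLM.comp (fderiv ℝ u p) :=
    (ofRealCLM.hasFDerivAt.comp p hu.hasFDerivAt).fderiv
  rw [fieldDeriv_eq_fderiv a b (differentiableAt_ofReal hu), hcomp, pds_eq_fderiv hu,
    pdt_eq_fderiv hu]
  rfl

lemma fieldDerivVec_complexify {V : ℝ × ℝ → Fin 3 → ℝ} (hV : DifferentiableAt ℝ V p) :
    fieldDerivVec a b (fun q => complexify (V q)) p = complexPushforward a b V p :=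
  funext fun i => fieldDeriv_ofReal (differentiableAt_pi.mp hV i)

lemma fieldDeriv_dot3 {V W : ℝ × ℝ → Fin 3 → ℂ} (hV : DifferentiableAt ℝ V p)
    (hW : DifferentiableAt ℝ W p) :
    fieldDeriv a b (fun q => dot3 (V q) (W q)) p
      = dot3 (fieldDerivVec a b V p) (W p) + dot3 (V p) (fieldDerivVec a b W p) := by
  have hVi := differentiableAt_pi.mp hV
  have hWi := differentiableAt_pi.mp hW
  have hVW (i : Fin 3) : DifferentiableAt ℝ (fun q => V q i * W q i) p := (hVi i).mul (hWi i)
  simp only [dot3, fieldDerivVec]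
  rw [fieldDeriv_add ((hVW 0).fun_add (hVW 1)) (hVW 2), fieldDeriv_add (hVW 0) (hVW 1),
    fieldDeriv_mul (hVi 0) (hWi 0), fieldDeriv_mul (hVi 1) (hWi 1), fieldDeriv_mul (hVi 2) (hWi 2)]
  ring

lemma fieldDerivVec_add {V W : ℝ × ℝ → Fin 3 → ℂ} (hV : DifferentiableAt ℝ V p)
    (hW : DifferentiableAt ℝ W p) :
    fieldDerivVec a b (fun q => V q + W q) p = fieldDerivVec a b V p + fieldDerivVec a b W p :=
  funext fun i => fieldDeriv_add (differentiableAt_pi.mp hV i) (differentiableAt_pi.mp hW i)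

lemma fieldDerivVec_smul {V : ℝ × ℝ → Fin 3 → ℂ} (hφ : DifferentiableAt ℝ φ p)
    (hV : DifferentiableAt ℝ V p) :
    fieldDerivVec a b (fun q => φ q • V q) p
      = fieldDeriv a b φ p • V p + φ p • fieldDerivVec a b V p :=
  funext fun i => fieldDeriv_mul hφ (differentiableAt_pi.mp hV i)

lemma cross3_complexPushforward_star (a b : ℝ × ℝ → ℂ) (V : ℝ × ℝ → Fin 3 → ℝ) (p : ℝ × ℝ) :
    cross3 (complexPushforward a b V p) (star (complexPushforward a b V p))
      = (a p * star (b p) - b p * star (a p)) • complexify (cross3 (vds V p) (vdt V p)) := by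
  rw [complexPushforward, star_add, star_smul, star_smul, star_complexify, star_complexify,
    cross3_linearCombination, cross3_complexify]

lemma dot3_complexPushforward (a b : ℝ × ℝ → ℂ) (V W : ℝ × ℝ → Fin 3 → ℝ) (p : ℝ × ℝ) :
    dot3 (complexPushforward a b V p) (complexPushforward a b W p)
      = a p ^ 2 * (dot3 (vds V p) (vds W p) : ℝ)
        + a p * b p * (dot3 (vds V p) (vdt W p) + dot3 (vdt V p) (vds W p) : ℝ)
        + b p ^ 2 * (dot3 (vdt V p) (vdt W p) : ℝ) := by
  rw [ofReal_add]
  simp only [← dot3_complexify]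
  simp only [complexPushforward, dot3_eq_dotProduct, add_dotProduct, dotProduct_add,
    smul_dotProduct, dotProduct_smul, smul_eq_mul]
  ring

variable {R U : ℝ × ℝ → Fin 3 → ℝ}

lemma differentiableAt_complexPushforward (hR : ContDiffAt ℝ 2 R p)
    (ha : DifferentiableAt ℝ a p) (hb : DifferentiableAt ℝ b p) :
    DifferentiableAt ℝ (complexPushforward a b R) p :=
  have hRs := (contDiffAt_vds hR one_add_one_eq_two.le).differentiableAt one_ne_zero
  have hRt := (contDiffAt_vdt hR one_add_one_eq_two.le).differentiableAt one_ne_zero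
  (ha.smul (differentiableAt_complexify hRs)).add (hb.smul (differentiableAt_complexify hRt))

lemma fieldDerivVec_complexPushforward (hR : ContDiffAt ℝ 2 R p)
    (ha : DifferentiableAt ℝ a p) (hb : DifferentiableAt ℝ b p) :
    fieldDerivVec a b (complexPushforward a b R) p
      = (fieldDeriv a b a p • complexify (vds R p) + fieldDeriv a b b p • complexify (vdt R p))
        + (a p ^ 2 • complexify (vds (vds R) p) + (2 * a p * b p) • complexify (vdt (vds R) p)
          + b p ^ 2 • complexify (vdt (vdt R) p)) := by
  have hRs := (contDiffAt_vds hR one_add_one_eq_two.le).differentiableAt one_ne_zero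
  have hRt := (contDiffAt_vdt hR one_add_one_eq_two.le).differentiableAt one_ne_zero
  have hcRs := differentiableAt_complexify hRs
  have hcRt := differentiableAt_complexify hRt
  have hcomm : vds (vdt R) p = vdt (vds R) p :=
    funext fun i => pds_pdt_comm (contDiffAt_pi.mp hR i)
  unfold complexPushforward
  rw [fieldDerivVec_add (ha.fun_smul hcRs) (hb.fun_smul hcRt), fieldDerivVec_smul ha hcRs,
    fieldDerivVec_smul hb hcRt, fieldDerivVec_complexify hRs, fieldDerivVec_complexify hRt,
    complexPushforward, complexPushforward, hcomm]
  module

lemma fieldDeriv_dot3_complexPushforward (hR : ContDiffAt ℝ 2 R p) (hU : DifferentiableAt ℝ U p)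
    (ha : DifferentiableAt ℝ a p) (hb : DifferentiableAt ℝ b p) :
    fieldDeriv a b (fun q => dot3 (complexPushforward a b R q) (complexify (U q))) p
      = dot3 (fieldDerivVec a b (complexPushforward a b R) p) (complexify (U p))
        + dot3 (complexPushforward a b R p) (complexPushforward a b U p) := by
  rw [fieldDeriv_dot3 (differentiableAt_complexPushforward hR ha hb)
    (differentiableAt_complexify hU), fieldDerivVec_complexify hU]

end ComplexVectorFields

section SecondFundamentalForm

/-- The unit normal `N` of a parametrized surface; it is `0` where the parametrization is not
regular. -/
def unitNormal (R : ℝ × ℝ → Fin 3 → ℝ) (p : ℝ × ℝ) : Fin 3 → ℝ :=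
  (enorm3 (cross3 (vds R p) (vdt R p)))⁻¹ • cross3 (vds R p) (vdt R p)

/-- The coefficient `e = R_ss · N` of the second fundamental form. -/
def secondFormE (R : ℝ × ℝ → Fin 3 → ℝ) (p : ℝ × ℝ) : ℝ :=
  dot3 (vds (vds R) p) (unitNormal R p)

/-- The coefficient `f = R_st · N` of the second fundamental form. -/
def secondFormF (R : ℝ × ℝ → Fin 3 → ℝ) (p : ℝ × ℝ) : ℝ :=
  dot3 (vdt (vds R) p) (unitNormal R p)

/-- The coefficient `g = R_tt · N` of the second fundamental form. -/
def secondFormG (R : ℝ × ℝ → Fin 3 → ℝ) (p : ℝ × ℝ) : ℝ :=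
  dot3 (vdt (vdt R) p) (unitNormal R p)

/-- The determinant `eg - f²` of the second fundamental form, which has the sign of the Gaussian
curvature. -/
def secondFormDet (R : ℝ × ℝ → Fin 3 → ℝ) (p : ℝ × ℝ) : ℝ :=
  secondFormE R p * secondFormG R p - secondFormF R p ^ 2

/-- The coefficient `λ = -f + i√(eg - f²)` of the field of asymptotic directions
`g ∂/∂s + λ ∂/∂t`, meaningful where `eg - f² ≥ 0`. -/
def asymptoticSlope (R : ℝ × ℝ → Fin 3 → ℝ) (p : ℝ × ℝ) : ℂ :=
  -(secondFormF R p : ℂ) + I * (√(secondFormDet R p) : ℝ)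

variable {R : ℝ × ℝ → Fin 3 → ℝ} {a b : ℝ × ℝ → ℂ} {p : ℝ × ℝ}

lemma asymptoticSlope_quadratic (hK : 0 ≤ secondFormDet R p) :
    asymptoticSlope R p ^ 2 + 2 * secondFormF R p * asymptoticSlope R p
      + secondFormE R p * secondFormG R p = 0 := by
  have hsq : ((√(secondFormDet R p) : ℝ) : ℂ) ^ 2
      = secondFormE R p * secondFormG R p - (secondFormF R p : ℂ) ^ 2 := by
    exact_mod_cast Real.sq_sqrt hK
  rw [asymptoticSlope]
  linear_combination (√(secondFormDet R p) : ℂ) ^ 2 * I_sq - hsq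

lemma star_asymptoticSlope (hdet : secondFormDet R p = 0) :
    star (asymptoticSlope R p) = asymptoticSlope R p := by
  simp [asymptoticSlope, hdet]

lemma differentiableAt_dot3_unitNormal {V : ℝ × ℝ → Fin 3 → ℝ} (hR : ContDiffAt ℝ 2 R p)
    (hreg : cross3 (vds R p) (vdt R p) ≠ 0) (hV : DifferentiableAt ℝ V p) :
    DifferentiableAt ℝ (fun q => dot3 (V q) (unitNormal R q)) p :=
  have hRs := (contDiffAt_vds hR one_add_one_eq_two.le).differentiableAt one_ne_zero
  have hRt := (contDiffAt_vdt hR one_add_one_eq_two.le).differentiableAt one_ne_zero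
  differentiableAt_dot3 hV (differentiableAt_normalize (differentiableAt_cross3 hRs hRt) hreg)

lemma differentiableAt_secondFormE (hR : ContDiffAt ℝ 3 R p)
    (hreg : cross3 (vds R p) (vdt R p) ≠ 0) : DifferentiableAt ℝ (secondFormE R) p :=
  differentiableAt_dot3_unitNormal (hR.of_le (by norm_num)) hreg
    ((contDiffAt_vds (contDiffAt_vds hR two_add_one_eq_three.le)
      one_add_one_eq_two.le).differentiableAt one_ne_zero)

lemma differentiableAt_secondFormF (hR : ContDiffAt ℝ 3 R p)
    (hreg : cross3 (vds R p) (vdt R p) ≠ 0) : DifferentiableAt ℝ (secondFormF R) p :=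
  differentiableAt_dot3_unitNormal (hR.of_le (by norm_num)) hreg
    ((contDiffAt_vdt (contDiffAt_vds hR two_add_one_eq_three.le)
      one_add_one_eq_two.le).differentiableAt one_ne_zero)

lemma differentiableAt_secondFormG (hR : ContDiffAt ℝ 3 R p)
    (hreg : cross3 (vds R p) (vdt R p) ≠ 0) : DifferentiableAt ℝ (secondFormG R) p :=
  differentiableAt_dot3_unitNormal (hR.of_le (by norm_num)) hreg
    ((contDiffAt_vdt (contDiffAt_vdt hR two_add_one_eq_three.le)
      one_add_one_eq_two.le).differentiableAt one_ne_zero)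

lemma differentiableAt_asymptoticSlope (hR : ContDiffAt ℝ 3 R p)
    (hreg : cross3 (vds R p) (vdt R p) ≠ 0) (hdet : secondFormDet R p ≠ 0) :
    DifferentiableAt ℝ (asymptoticSlope R) p := by
  have he := differentiableAt_secondFormE hR hreg
  have hf := differentiableAt_secondFormF hR hreg
  have hg := differentiableAt_secondFormG hR hreg
  have hdiff : DifferentiableAt ℝ (secondFormDet R) p := (he.mul hg).sub (hf.pow 2)
  exact (differentiableAt_ofReal hf).neg.add
    ((differentiableAt_ofReal (hdiff.sqrt hdet)).const_mul I)

lemma dot3_complexify_cross3_partials (R : ℝ × ℝ → Fin 3 → ℝ) (p : ℝ × ℝ) (v : Fin 3 → ℝ) :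
    dot3 (complexify v) (complexify (cross3 (vds R p) (vdt R p)))
      = enorm3 (cross3 (vds R p) (vdt R p)) * (dot3 v (unitNormal R p) : ℝ) := by
  rw [dot3_complexify, unitNormal, ← enorm3_mul_dot3_normalize, ofReal_mul]

lemma dot3_fieldDerivVec_complexPushforward_cross3 (hR : ContDiffAt ℝ 2 R p)
    (ha : DifferentiableAt ℝ a p) (hb : DifferentiableAt ℝ b p) :
    dot3 (fieldDerivVec a b (complexPushforward a b R) p)
        (complexify (cross3 (vds R p) (vdt R p)))
      = enorm3 (cross3 (vds R p) (vdt R p)) * (a p ^ 2 * secondFormE R p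
          + 2 * a p * b p * secondFormF R p + b p ^ 2 * secondFormG R p) := by
  have hs : dot3 (complexify (vds R p)) (complexify (cross3 (vds R p) (vdt R p))) = 0 := by
    rw [← cross3_complexify, dot3_eq_dotProduct, cross3_eq_crossProduct, dot_self_cross]
  have ht : dot3 (complexify (vdt R p)) (complexify (cross3 (vds R p) (vdt R p))) = 0 := by
    rw [← cross3_complexify, dot3_eq_dotProduct, cross3_eq_crossProduct, dot_cross_self]
  have hss := dot3_complexify_cross3_partials R p (vds (vds R) p)
  have hst := dot3_complexify_cross3_partials R p (vdt (vds R) p)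
  have htt := dot3_complexify_cross3_partials R p (vdt (vdt R) p)
  rw [fieldDerivVec_complexPushforward hR ha hb]
  simp only [dot3_eq_dotProduct, add_dotProduct, smul_dotProduct, smul_eq_mul, secondFormE,
    secondFormF, secondFormG] at hs ht hss hst htt ⊢
  rw [hs, ht, hss, hst, htt]
  ring

end SecondFundamentalForm

section BersVekua

/-- The coefficient `A` of the Bers-Vekua equation, for `P = LR` and `V = L²R`. -/
def bersVekuaA (P V : Fin 3 → ℂ) : ℂ := dot3 (cross3 P (star P)) (cross3 V (star P))

/-- The coefficient `B` of the Bers-Vekua equation, for `P = LR` and `V = L²R`. -/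
def bersVekuaB (P V : Fin 3 → ℂ) : ℂ := dot3 (cross3 P (star P)) (cross3 V P)

/-- The coefficient `C` of the Bers-Vekua equation, for `P = LR`. -/
def bersVekuaC (P : Fin 3 → ℂ) : ℂ := dot3 (cross3 P (star P)) (cross3 P (star P))

variable {R U : ℝ × ℝ → Fin 3 → ℝ} {p : ℝ × ℝ} {F G H : ℝ}

theorem bersVekua_of_null_direction {a b : ℝ × ℝ → ℂ} (hR : ContDiffAt ℝ 2 R p)
    (hU : DifferentiableAt ℝ U p) (ha : DifferentiableAt ℝ a p) (hb : DifferentiableAt ℝ b p)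
    (hnull : a p ^ 2 * secondFormE R p + 2 * a p * b p * secondFormF R p
      + b p ^ 2 * secondFormG R p = 0)
    (hF : dot3 (vds R p) (vds U p) = F)
    (hG : dot3 (vds R p) (vdt U p) + dot3 (vdt R p) (vds U p) = G)
    (hH : dot3 (vdt R p) (vdt U p) = H) :
    let LR := complexPushforward a b R
    let L2R := fieldDerivVec a b LR
    let h := fun q => dot3 (LR q) (complexify (U q))
    bersVekuaC (LR p) * fieldDeriv a b h p
      = bersVekuaA (LR p) (L2R p) * h p - bersVekuaB (LR p) (L2R p) * starRingEnd ℂ (h p)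
        + bersVekuaC (LR p) * (a p ^ 2 * F + a p * b p * G + b p ^ 2 * H) := by
  intro LR L2R h
  have htangent : dot3 (L2R p) (cross3 (LR p) (star (LR p))) = 0 := by
    rw [cross3_complexPushforward_star, dot3_eq_dotProduct, dotProduct_smul, ← dot3_eq_dotProduct,
      dot3_fieldDerivVec_complexPushforward_cross3 hR ha hb, hnull, mul_zero, smul_zero]
  have hbending : dot3 (LR p) (complexPushforward a b U p)
      = a p ^ 2 * F + a p * b p * G + b p ^ 2 * H := by
    rw [dot3_complexPushforward, hF, hG, hH]
  rw [fieldDeriv_dot3_complexPushforward hR hU ha hb, hbending, mul_add, conj_dot3_complexify,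
    bersVekuaC, dot3_cross3_self_mul_dot3 htangent, bersVekuaA, bersVekuaB]

theorem bending_field_satisfies_BersVekua_equation_general (hR : ContDiffAt ℝ 3 R p)
    (hreg : cross3 (vds R p) (vdt R p) ≠ 0) (hK : 0 ≤ secondFormDet R p)
    (hU : DifferentiableAt ℝ U p)
    (hF : dot3 (vds R p) (vds U p) = F)
    (hG : dot3 (vds R p) (vdt U p) + dot3 (vdt R p) (vds U p) = G)
    (hH : dot3 (vdt R p) (vdt U p) = H) :
    let g : ℝ × ℝ → ℂ := fun q => secondFormG R q
    let lam := asymptoticSlope R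
    let LR := complexPushforward g lam R
    let L2R := fieldDerivVec g lam LR
    let h := fun q => dot3 (LR q) (complexify (U q))
    bersVekuaC (LR p) * fieldDeriv g lam h p
      = bersVekuaA (LR p) (L2R p) * h p - bersVekuaB (LR p) (L2R p) * starRingEnd ℂ (h p)
        + bersVekuaC (LR p) * (g p ^ 2 * F + g p * lam p * G + lam p ^ 2 * H) := by
  intro g lam LR L2R h
  rcases eq_or_ne (secondFormDet R p) 0 with hflat | hcurved
  · have hreal : cross3 (LR p) (star (LR p)) = 0 := by
      rw [cross3_complexPushforward_star, star_asymptoticSlope hflat, mul_comm (g p),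
        show star (g p) = g p from conj_ofReal _, sub_self, zero_smul]
    simp only [bersVekuaA, bersVekuaB, bersVekuaC, hreal, dot3_eq_dotProduct, zero_dotProduct,
      zero_mul, sub_zero, add_zero]
  · refine bersVekua_of_null_direction (hR.of_le (by norm_num)) hU
      (differentiableAt_ofReal (differentiableAt_secondFormG hR hreg))
      (differentiableAt_asymptoticSlope hR hreg hcurved) ?_ hF hG hH
    linear_combination (secondFormG R p : ℂ) * asymptoticSlope_quadratic hK

end BersVekua

/-- Proposition 2.1 / "Wild Strawberries".
For a surface with nonnegative curvature and the complex vector field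
`L = g ∂/∂s + λ ∂/∂t` of asymptotic directions, if `U = (u,v,w)` is a `C²` solution of the
bending system with right-hand sides `F, G, H`, then `h = LR · U` satisfies
`C·Lh = A·h − B·conj h + C·(g²F + gλG + λ²H)`. -/
theorem bending_field_satisfies_BersVekua_equation
    (Ω : Set (ℝ × ℝ)) (hΩ : IsOpen Ω)
    (R : ℝ × ℝ → Fin 3 → ℝ) (hR : ContDiffOn ℝ (⊤ : ℕ∞) R Ω)
    (hreg : ∀ p ∈ Ω, cross3 (vds R p) (vdt R p) ≠ 0)
    (e f g : ℝ × ℝ → ℝ)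
    (he : ∀ p, e p = dot3 (vds (vds R) p)
        ((enorm3 (cross3 (vds R p) (vdt R p)))⁻¹ • cross3 (vds R p) (vdt R p)))
    (hf : ∀ p, f p = dot3 (vdt (vds R) p)
        ((enorm3 (cross3 (vds R p) (vdt R p)))⁻¹ • cross3 (vds R p) (vdt R p)))
    (hg : ∀ p, g p = dot3 (vdt (vdt R) p)
        ((enorm3 (cross3 (vds R p) (vdt R p)))⁻¹ • cross3 (vds R p) (vdt R p)))
    (hK : ∀ p ∈ Ω, 0 ≤ e p * g p - f p ^ 2)
    (lam : ℝ × ℝ → ℂ)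
    (hlam : ∀ p, lam p = -(f p : ℂ) + Complex.I * ((Real.sqrt (e p * g p - f p ^ 2) : ℝ) : ℂ))
    (LR L2R : ℝ × ℝ → Fin 3 → ℂ)
    (hLR : ∀ p i, LR p i = (g p : ℂ) * ((vds R p i : ℝ) : ℂ) + lam p * ((vdt R p i : ℝ) : ℂ))
    (hL2R : ∀ p i, L2R p i = (g p : ℂ) * pds (fun q => LR q i) p + lam p * pdt (fun q => LR q i) p)
    (F G H : ℝ × ℝ → ℝ)
    (U : ℝ × ℝ → Fin 3 → ℝ) (hU : ContDiffOn ℝ 2 U Ω)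
    (hsys1 : ∀ p ∈ Ω, dot3 (vds R p) (vds U p) = F p)
    (hsys2 : ∀ p ∈ Ω, dot3 (vds R p) (vdt U p) + dot3 (vdt R p) (vds U p) = G p)
    (hsys3 : ∀ p ∈ Ω, dot3 (vdt R p) (vdt U p) = H p)
    (h : ℝ × ℝ → ℂ)
    (hh : ∀ p, h p = dot3 (LR p) (fun i => ((U p i : ℝ) : ℂ)))
    (A B C : ℝ × ℝ → ℂ)
    (hA : ∀ p, A p = dot3 (cross3 (LR p) (fun i => starRingEnd ℂ (LR p i)))
        (cross3 (L2R p) (fun i => starRingEnd ℂ (LR p i))))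
    (hB : ∀ p, B p = dot3 (cross3 (LR p) (fun i => starRingEnd ℂ (LR p i)))
        (cross3 (L2R p) (LR p)))
    (hC : ∀ p, C p = dot3 (cross3 (LR p) (fun i => starRingEnd ℂ (LR p i)))
        (cross3 (LR p) (fun i => starRingEnd ℂ (LR p i)))) :
    ∀ p ∈ Ω,
      C p * ((g p : ℂ) * pds h p + lam p * pdt h p)
        = A p * h p - B p * starRingEnd ℂ (h p)
          + C p * ((g p : ℂ) ^ 2 * ((F p : ℝ) : ℂ) + (g p : ℂ) * lam p * ((G p : ℝ) : ℂ)
              + lam p ^ 2 * ((H p : ℝ) : ℂ)) := by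
  obtain rfl : e = secondFormE R := funext he
  obtain rfl : f = secondFormF R := funext hf
  obtain rfl : g = secondFormG R := funext hg
  obtain rfl : lam = asymptoticSlope R := funext hlam
  obtain rfl := funext₂ hLR
  obtain rfl := funext₂ hL2R
  obtain rfl := funext hh
  intro p hp
  have hΩp := hΩ.mem_nhds hp
  rw [hA, hB, hC]
  exact bending_field_satisfies_BersVekua_equation_general
    ((hR.contDiffAt hΩp).of_le (WithTop.coe_le_coe.mpr le_top)) (hreg p hp) (hK p hp)
    ((hU.contDiffAt hΩp).differentiableAt two_ne_zero) (hsys1 p hp) (hsys2 p hp) (hsys3 p hp)
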